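/- Let M ≥ 1, N ≥ 1, let B be a real N×N matrix with ‖B‖ ≤ 1, and let S be the M×M subdiagonal shift matrix. Then the matrix Ã = I_{MN} − S ⊗ B satisfies ‖Ã‖ ≤ 2 and ‖Ã⁻¹‖ ≤ M, and hence its condition number satisfies κ(Ã) = ‖Ã‖·‖Ã⁻¹‖ ≤ 2M. -/

import Mathlib

open Matrix
open scoped Kronecker

/-- The ℓ²→ℓ² operator (spectral) norm of a matrix. -/
noncomputable def specNorm {𝕜 : Type*} [RCLike 𝕜] {n : Type*} [Fintype n] [DecidableEq n]
    (A : Matrix n n 𝕜) : ℝ :=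
  ‖LinearMap.toContinuousLinearMap (Matrix.toEuclideanLin A)‖

/-- The M×M subdiagonal shift matrix: entry (i,j) is 1 if i = j+1 and 0 otherwise. -/
def shiftMatrix (M : ℕ) : Matrix (Fin M) (Fin M) ℝ :=
  Matrix.of fun i j => if (i : ℕ) = (j : ℕ) + 1 then 1 else 0

open scoped Matrix.Norms.L2Operator in
lemma specNorm_eq_norm {n : Type*} [Fintype n] [DecidableEq n]
    (A : Matrix n n ℝ) : specNorm A = ‖A‖ := rfl

lemma shift_pow (M k : ℕ) (i j : Fin M) :
    (shiftMatrix M ^ k) i j = if (i : ℕ) = (j : ℕ) + k then 1 else 0 := by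
  induction k generalizing i j with
  | zero => simp [Matrix.one_apply, Fin.ext_iff]
  | succ k ih =>
    rw [pow_succ, Matrix.mul_apply]
    simp only [ih]
    simp only [shiftMatrix, Matrix.of_apply]
    by_cases h : (i : ℕ) = (j : ℕ) + (k + 1)
    · have hj : (j : ℕ) + 1 < M := by have := i.2; omega
      rw [Finset.sum_eq_single (⟨(j : ℕ) + 1, hj⟩ : Fin M)]
      · simp [h]; omega
      · intro b _ hb
        have : ¬ ((b : ℕ) = (j : ℕ) + 1) := fun e => hb (Fin.ext e)
        simp [this]
      · simp
    · rw [if_neg h]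
      apply Finset.sum_eq_zero
      intro b _
      by_cases h1 : (b : ℕ) = (j : ℕ) + 1
      · rw [if_neg (by omega)]; simp
      · simp [h1]

lemma shift_pow_self (M : ℕ) : shiftMatrix M ^ M = 0 := by
  ext i j
  rw [shift_pow, if_neg (by have := i.2; omega)]
  rfl

lemma kron_pow {M N : ℕ} (A : Matrix (Fin M) (Fin M) ℝ) (B : Matrix (Fin N) (Fin N) ℝ) (k : ℕ) :
    (A ⊗ₖ B) ^ k = (A ^ k) ⊗ₖ (B ^ k) := by
  induction k with
  | zero => simp
  | succ k ih => rw [pow_succ, pow_succ, pow_succ, ih, Matrix.mul_kronecker_mul]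

lemma sum_mulVec_sq_le {N : ℕ} (B : Matrix (Fin N) (Fin N) ℝ) (hB : specNorm B ≤ 1)
    (v : Fin N → ℝ) : ∑ a, (B *ᵥ v) a ^ 2 ≤ ∑ a, v a ^ 2 := by
  have h := (LinearMap.toContinuousLinearMap (Matrix.toEuclideanLin B)).le_of_opNorm_le hB
    (WithLp.toLp 2 v)
  rw [one_mul] at h
  have h2 := pow_le_pow_left₀ (norm_nonneg _) h 2
  rw [EuclideanSpace.norm_sq_eq, EuclideanSpace.norm_sq_eq] at h2
  simpa [Matrix.toLpLin_apply] using h2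

lemma specNorm_shift_kron {M N : ℕ} (B : Matrix (Fin N) (Fin N) ℝ) (hB : specNorm B ≤ 1) :
    specNorm (shiftMatrix M ⊗ₖ B) ≤ 1 := by
  unfold specNorm
  refine ContinuousLinearMap.opNorm_le_bound _ zero_le_one fun x => ?_
  rw [one_mul]
  refine (pow_le_pow_iff_left₀ (norm_nonneg _) (norm_nonneg _) two_ne_zero).1 ?_
  rw [EuclideanSpace.norm_sq_eq, EuclideanSpace.norm_sq_eq]
  simp only [LinearMap.coe_toContinuousLinearMap', Matrix.toLpLin_apply, Real.norm_eq_abs, sq_abs]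
  rw [Fintype.sum_prod_type, Fintype.sum_prod_type]
  cases M with
  | zero => simp
  | succ m =>
    have key : ∀ (i : Fin (m+1)) (a : Fin N), ((shiftMatrix (m+1) ⊗ₖ B) *ᵥ x.ofLp) (i, a)
        = ∑ j, shiftMatrix (m+1) i j * (B *ᵥ fun b => x (j, b)) a := by
      intro i a
      simp only [Matrix.mulVec, dotProduct, Fintype.sum_prod_type, Matrix.kroneckerMap_apply,
        Finset.mul_sum, mul_assoc]
    have h0 : ∀ a : Fin N, ((shiftMatrix (m+1) ⊗ₖ B) *ᵥ x.ofLp) (0, a) = 0 := by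
      intro a; rw [key]; simp [shiftMatrix]
    have hs : ∀ (k : Fin m) (a : Fin N), ((shiftMatrix (m+1) ⊗ₖ B) *ᵥ x.ofLp) (k.succ, a)
        = (B *ᵥ fun b => x (k.castSucc, b)) a := by
      intro k a
      rw [key, Finset.sum_eq_single k.castSucc]
      · simp [shiftMatrix]
      · intro j _ hj
        have : ¬ ((k : ℕ) = (j : ℕ)) := fun e => hj (Fin.ext e.symm)
        simp [shiftMatrix, this]
      · simp
    rw [Fin.sum_univ_succ, Fin.sum_univ_castSucc (n := m) (f := fun i => ∑ a, x (i, a) ^ 2)]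
    simp only [h0, hs]
    have h1 := Finset.sum_le_sum fun (k : Fin m) (_ : k ∈ Finset.univ) =>
      sum_mulVec_sq_le B hB fun b => x (k.castSucc, b)
    have h2 : 0 ≤ ∑ a, x (Fin.last m, a) ^ 2 := Finset.sum_nonneg fun a _ => sq_nonneg _
    simp only [ne_eq, OfNat.ofNat_ne_zero, not_false_eq_true, zero_pow, Finset.sum_const_zero,
      zero_add]
    linarith

open scoped Matrix.Norms.L2Operator in
theorem stmt12 {M N : ℕ} (hM : 1 ≤ M) (hN : 1 ≤ N)
    (B : Matrix (Fin N) (Fin N) ℝ) (hB : specNorm B ≤ 1) :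
    specNorm ((1 : Matrix (Fin M × Fin N) (Fin M × Fin N) ℝ) - shiftMatrix M ⊗ₖ B) ≤ 2 ∧
      specNorm ((1 : Matrix (Fin M × Fin N) (Fin M × Fin N) ℝ) - shiftMatrix M ⊗ₖ B)⁻¹
        ≤ (M : ℝ) ∧
      specNorm ((1 : Matrix (Fin M × Fin N) (Fin M × Fin N) ℝ) - shiftMatrix M ⊗ₖ B) *
          specNorm ((1 : Matrix (Fin M × Fin N) (Fin M × Fin N) ℝ) - shiftMatrix M ⊗ₖ B)⁻¹
        ≤ 2 * (M : ℝ) := by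
  have hT := specNorm_shift_kron (M := M) B hB
  have hnil : (shiftMatrix M ⊗ₖ B) ^ M = 0 := by
    rw [kron_pow, shift_pow_self, Matrix.zero_kronecker]
  have hone : specNorm (1 : Matrix (Fin M × Fin N) (Fin M × Fin N) ℝ) ≤ 1 := by
    unfold specNorm
    refine ContinuousLinearMap.opNorm_le_bound _ zero_le_one fun x => ?_
    simp [Matrix.toLpLin_apply]
  generalize shiftMatrix M ⊗ₖ B = T at *
  have hinv : (1 - T)⁻¹ = ∑ k ∈ Finset.range M, T ^ k := by
    apply Matrix.inv_eq_right_inv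
    rw [mul_neg_geom_sum, hnil, sub_zero]
  simp only [specNorm_eq_norm] at *
  have hA : ‖1 - T‖ ≤ 2 := (norm_sub_le _ _).trans (by linarith)
  have hpow : ∀ k : ℕ, ‖T ^ k‖ ≤ 1 := by
    intro k
    induction k with
    | zero => simpa using hone
    | succ k ih =>
      rw [pow_succ]
      exact (norm_mul_le _ _).trans (mul_le_one₀ ih (norm_nonneg _) hT)
  have hI : ‖(1 - T)⁻¹‖ ≤ (M : ℝ) := by
    rw [hinv]
    refine (norm_sum_le _ _).trans ((Finset.sum_le_sum fun k _ => hpow k).trans ?_)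
    simp
  exact ⟨hA, hI, mul_le_mul hA hI (norm_nonneg _) (by norm_num)⟩
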